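/- arXiv:2202.04026 — 2 statements merged into one kernel-verified Lean document; each statement's English description precedes it below -/
import Mathlib

section
/- For the sparse-PCA objective g(X) = −⟨ zz^⊤ + z⊥z⊥^⊤, X ⟩ + (1/(2k))‖X‖₁ with 1 ≤ k ≤ n/4, the matrix −(1/2)·zz^⊤ is a subgradient of g at zz^⊤ (i.e., −(1/2)zz^⊤ ∈ ∂g(zz^⊤)), it satisfies the first-order optimality condition ⟨X − zz^⊤, −(1/2)zz^⊤⟩ ≥ 0 for all X ∈ S_n (hence zz^⊤ is a rank-one minimizer of g over S_n), and it has the eigen-gap λ_{n−1}(−(1/2)zz^⊤) − λ_n(−(1/2)zz^⊤) = 1/2 > 0, so the optimal solution zz^⊤ satisfies strict complementarity. -/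
open scoped BigOperators RealInnerProductSpace
open Matrix

noncomputable section

abbrev Mat (n : ℕ) := Matrix (Fin n) (Fin n) ℝ
abbrev Vec (m : ℕ) := EuclideanSpace ℝ (Fin m)

/-- Trace inner product `⟨A,B⟩ = Tr(AB)`. -/
def mip {n : ℕ} (A B : Mat n) : ℝ := (A * B).trace

/-- Frobenius norm. -/
def frob {n : ℕ} (A : Mat n) : ℝ := Real.sqrt (∑ i, ∑ j, (A i j) ^ 2)

/-- The set of symmetric `n × n` real matrices (the space `𝕊ⁿ`). -/
def SymM (n : ℕ) : Set (Mat n) := {X | X.IsSymm}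

/-- The spectrahedron `S_n`. -/
def Spectra (n : ℕ) : Set (Mat n) := {X | X.trace = 1 ∧ X.PosSemidef}

/-- `lam A k` : the `k`-th largest eigenvalue of a symmetric matrix `A` (1-indexed,
so `lam A 1 = λ₁(A)` is the largest and `lam A n = λₙ(A)` is the smallest);
junk value otherwise. -/
def lam {n : ℕ} (A : Mat n) (k : ℕ) : ℝ :=
  if h : k - 1 < n then
    if hA : A.IsHermitian then
      hA.eigenvalues (Tuple.sort hA.eigenvalues (Fin.rev ⟨k - 1, h⟩))
    else 0
  else 0

/-- Multiplicity of the smallest eigenvalue of `A`. -/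
def multMin {n : ℕ} (A : Mat n) : ℕ :=
  letI := Classical.decPred fun k : ℕ => lam A k = lam A n
  ((Finset.Icc 1 n).filter fun k => lam A k = lam A n).card

/-- Subdifferential of `g : 𝕊ⁿ → ℝ` at `X`. -/
def subdiff {n : ℕ} (g : Mat n → ℝ) (X : Mat n) : Set (Mat n) :=
  {G | G.IsSymm ∧ ∀ Y ∈ SymM n, g Y ≥ g X + mip G (Y - X)}

/-- Euclidean (Frobenius-norm) projection onto `C ⊆ 𝕊ⁿ`. -/
def mproj {n : ℕ} (C : Set (Mat n)) (X : Mat n) : Mat n :=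
  Classical.epsilon fun P => P ∈ C ∧ ∀ Q ∈ C, frob (X - P) ≤ frob (X - Q)

/-- Euclidean projection onto `C ⊆ ℝᵐ`. -/
def vproj {m : ℕ} (C : Set (Vec m)) (x : Vec m) : Vec m :=
  Classical.epsilon fun p => p ∈ C ∧ ∀ q ∈ C, ‖x - p‖ ≤ ‖x - q‖

/-- Norm on the product space `𝕊ⁿ × ℝᵐ`. -/
def pnorm {n m : ℕ} (X : Mat n) (y : Vec m) : ℝ := Real.sqrt (frob X ^ 2 + ‖y‖ ^ 2)

/-!
For `g X = -⟨C, X⟩ + μ‖X‖₁`, every symmetric `W` with entries of absolute value at most `μ` and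
`⟨W, X⟩ = μ‖X‖₁` (an element of `μ ∂‖·‖₁` at `X`) gives the subgradient `W - C` of `g` at `X`.
Let `z` and `z⊥` be the normalized indicators of a set of `k` indices and of its complement, and let
`C = zzᵀ + z⊥z⊥ᵀ`. The choice `W = μk zzᵀ + z⊥z⊥ᵀ` has the entries `μ`, `1 / (n - k)` and `0`,
so it is admissible as soon as `1 ≤ μ(n - k)`, and it leaves the subgradient `-(1 - μk) zzᵀ`.
When `μk ≤ 1`, the pairing of this subgradient with the spectrahedron is minimal at `zzᵀ` because
`zᵀXz ≤ Tr X` for positive semidefinite `X`, and its spectrum is `0, …, 0, -(1 - μk)`.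
The theorem is the case `μ = 1 / (2k)`.
-/

open Finset

section MatrixLemmas

variable {ι K : Type*}

theorem isSymm_vecMulVec_self [CommMagma K] (u : ι → K) : (vecMulVec u u).IsSymm :=
  transpose_vecMulVec u u

variable [Fintype ι]

theorem rank_vecMulVec_eq_one [Field K] {u v : ι → K} (hu : u ≠ 0) (hv : v ≠ 0) :
    (vecMulVec u v).rank = 1 := by
  classical
  refine le_antisymm (rank_vecMulVec_le u v) (Nat.one_le_iff_ne_zero.2 fun hrank => ?_)
  rw [Matrix.rank, Submodule.finrank_eq_zero, LinearMap.range_eq_bot] at hrank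
  exact vecMulVec_ne_zero hu hv (toLin'.injective (hrank.trans (map_zero _).symm))

theorem sum_abs_vecMulVec {κ : Type*} [Fintype κ] (u : ι → ℝ) (v : κ → ℝ) :
    ∑ i, ∑ j, |vecMulVec u v i j| = (∑ i, |u i|) * ∑ j, |v j| := by
  simp only [vecMulVec_apply, abs_mul, sum_mul_sum]

theorem dotProduct_sq_le (u v : ι → ℝ) : (u ⬝ᵥ v) ^ 2 ≤ (u ⬝ᵥ u) * (v ⬝ᵥ v) := by
  simpa only [dotProduct, sq] using sum_mul_sq_le_sq_mul_sq univ u v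

theorem dotProduct_mulVec_le_trace {X : Matrix ι ι ℝ} (hX : X.PosSemidef) (u : ι → ℝ) :
    u ⬝ᵥ X *ᵥ u ≤ (u ⬝ᵥ u) * X.trace := by
  obtain ⟨m, v, rfl⟩ := posSemidef_iff_eq_sum_vecMulVec.1 hX
  calc u ⬝ᵥ (∑ i, vecMulVec (v i) (star (v i))) *ᵥ u
      = ∑ i, (u ⬝ᵥ v i) ^ 2 := by
        simp [sum_mulVec, sum_dotProduct, vecMulVec_mulVec, sq, dotProduct_comm u]
    _ ≤ ∑ i, (u ⬝ᵥ u) * (v i ⬝ᵥ v i) := sum_le_sum fun i _ => dotProduct_sq_le u (v i)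
    _ = (u ⬝ᵥ u) * (∑ i, vecMulVec (v i) (star (v i))).trace := by
        simp [trace_sum, trace_vecMulVec, mul_sum]

theorem charpoly_vecMulVec_eq_prod [DecidableEq ι] [CommRing K] (u v : ι → K) (i : ι) :
    (vecMulVec u v).charpoly
      = ∏ j, (Polynomial.X - Polynomial.C ((Pi.single i (u ⬝ᵥ v) : ι → K) j)) := by
  have hdiag (x : K) : diagonal (Pi.single i x) = vecMulVec (Pi.single i x) (Pi.single i 1) := by
    ext a b
    rw [diagonal_single, single_apply, vecMulVec_apply, Pi.single_apply, Pi.single_apply]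
    grind
  rw [← charpoly_diagonal, hdiag, charpoly_vecMulVec, charpoly_vecMulVec, single_dotProduct,
    Pi.single_eq_same, mul_one]

end MatrixLemmas

section SortedEigenvalues

theorem comp_sort_eq_of_map_univ_eq {α : Type*} [LinearOrder α] {n : ℕ} {f d : Fin n → α}
    (hd : Monotone d) (hfd : univ.val.map f = univ.val.map d) : f ∘ Tuple.sort f = d := by
  rw [Fin.univ_val_map, Fin.univ_val_map, Multiset.coe_eq_coe] at hfd
  exact List.ofFn_injective <| (((Tuple.sort f).ofFn_comp_perm f).trans hfd).eq_of_pairwise'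
    (Tuple.monotone_sort f).sortedLE_ofFn.pairwise hd.sortedLE_ofFn.pairwise

theorem lam_eq_of_charpoly_eq_prod {n : ℕ} {A : Mat n} (hA : A.IsHermitian) {d : Fin n → ℝ}
    (hd : Antitone d) (hcharpoly : A.charpoly = ∏ j, (Polynomial.X - Polynomial.C (d j)))
    (i : Fin n) : lam A (i + 1) = d i := by
  have hroots : A.charpoly.roots = univ.val.map d := by
    rw [hcharpoly, ← Polynomial.roots_multiset_prod_X_sub_C (univ.val.map d), Multiset.map_map]
    rfl
  have hsorted : hA.eigenvalues ∘ Tuple.sort hA.eigenvalues = d ∘ Fin.rev := by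
    refine comp_sort_eq_of_map_univ_eq (hd.comp Fin.rev_anti) ?_
    calc univ.val.map hA.eigenvalues
        = A.charpoly.roots := hA.roots_charpoly_eq_eigenvalues.symm
      _ = (univ.val.map Fin.revPerm).map d := by rw [hroots, Multiset.map_univ_val_equiv]
      _ = univ.val.map (d ∘ Fin.rev) := Multiset.map_map ..
  have hlam : lam A (i + 1) = (hA.eigenvalues ∘ Tuple.sort hA.eigenvalues) i.rev := by
    simp only [lam, Nat.add_sub_cancel, i.isLt, hA, dif_pos, Function.comp_apply]
  rw [hlam, hsorted, Function.comp_apply, Fin.rev_rev]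

theorem lam_vecMulVec_sub_lam {n : ℕ} (hn : 2 ≤ n) {u v : Fin n → ℝ}
    (huv : (vecMulVec u v).IsHermitian) (hle : u ⬝ᵥ v ≤ 0) :
    lam (vecMulVec u v) (n - 1) - lam (vecMulVec u v) n = -(u ⬝ᵥ v) := by
  obtain ⟨m, rfl⟩ := Nat.exists_eq_add_of_le' hn
  set d : Fin (m + 2) → ℝ := Pi.single (Fin.last (m + 1)) (u ⬝ᵥ v) with hd
  have hanti : Antitone d := fun i j hij => by
    by_cases hj : j = Fin.last (m + 1)
    · by_cases hi : i = Fin.last (m + 1) <;> simp [hd, hi, hj, hle]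
    · simp [hd, hj, (hij.trans_lt (Fin.lt_last_iff_ne_last.2 hj)).ne]
  have hlam := lam_eq_of_charpoly_eq_prod huv hanti (charpoly_vecMulVec_eq_prod u v _)
  have hpenultimate : lam (vecMulVec u v) (m + 1) = 0 := by
    simpa [hd] using hlam (Fin.last m).castSucc
  have hlast : lam (vecMulVec u v) (m + 2) = u ⬝ᵥ v := by
    simpa [hd] using hlam (Fin.last (m + 1))
  rw [hlast, show m + 2 - 1 = m + 1 from rfl, hpenultimate, zero_sub]

end SortedEigenvalues

section TraceInnerProduct

variable {n : ℕ}

theorem mip_comm (A B : Mat n) : mip A B = mip B A := trace_mul_comm A B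

theorem mip_add_left (A B X : Mat n) : mip (A + B) X = mip A X + mip B X := by
  simp only [mip, add_mul, trace_add]

theorem mip_sub_left (A B X : Mat n) : mip (A - B) X = mip A X - mip B X := by
  simp only [mip, sub_mul, trace_sub]

theorem mip_sub_right (A X Y : Mat n) : mip A (X - Y) = mip A X - mip A Y := by
  simp only [mip, mul_sub, trace_sub]

theorem mip_smul_left (c : ℝ) (A X : Mat n) : mip (c • A) X = c * mip A X := by
  simp only [mip, smul_mul_assoc, trace_smul, smul_eq_mul]

theorem mip_vecMulVec (u v : Fin n → ℝ) (X : Mat n) :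
    mip (vecMulVec u v) X = v ⬝ᵥ X *ᵥ u := by
  rw [mip, vecMulVec_mul, trace_vecMulVec, dotProduct_comm, dotProduct_mulVec]

theorem mip_vecMulVec_self (u v : Fin n → ℝ) :
    mip (vecMulVec u u) (vecMulVec v v) = (u ⬝ᵥ v) ^ 2 := by
  simp [mip_vecMulVec, vecMulVec_mulVec, sq, dotProduct_comm v]

theorem mip_le_mul_sum_abs {W : Mat n} {μ : ℝ} (hW : ∀ i j, |W i j| ≤ μ) (X : Mat n) :
    mip W X ≤ μ * ∑ i, ∑ j, |X i j| := by
  calc mip W X = ∑ i, ∑ j, W j i * X i j := by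
        simp only [mip, trace, diag_apply, mul_apply]
        exact sum_comm
    _ ≤ ∑ i, ∑ j, μ * |X i j| := sum_le_sum fun i _ => sum_le_sum fun j _ =>
        (le_abs_self _).trans <| by
          rw [abs_mul]
          exact mul_le_mul_of_nonneg_right (hW j i) (abs_nonneg _)
    _ = μ * ∑ i, ∑ j, |X i j| := by simp only [mul_sum]

end TraceInnerProduct

section Optimality

variable {n : ℕ}

theorem le_of_mem_subdiff {g : Mat n → ℝ} {G X Y : Mat n} (hG : G ∈ subdiff g X)
    (hY : Y ∈ SymM n) (hGY : 0 ≤ mip (Y - X) G) : g X ≤ g Y := by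
  have := hG.2 Y hY
  rw [mip_comm] at hGY
  linarith

/-- The objective `X ↦ -⟨C, X⟩ + μ‖X‖₁` of sparse PCA with covariance matrix `C` and penalty weight
`μ`, where `‖·‖₁` is the entrywise `ℓ₁`-norm. -/
def sparsePCAObjective (C : Mat n) (μ : ℝ) (X : Mat n) : ℝ :=
  -(mip C X) + μ * ∑ i, ∑ j, |X i j|

theorem sub_mem_subdiff_sparsePCAObjective {C W X : Mat n} {μ : ℝ} (hC : C.IsSymm)
    (hW : W.IsSymm) (hWμ : ∀ i j, |W i j| ≤ μ) (hWX : mip W X = μ * ∑ i, ∑ j, |X i j|) :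
    W - C ∈ subdiff (sparsePCAObjective C μ) X := by
  refine ⟨hW.sub hC, fun Y _ => ?_⟩
  have := mip_le_mul_sum_abs hWμ Y
  simp only [sparsePCAObjective, mip_sub_left, mip_sub_right]
  linarith

variable {u : Fin n → ℝ}

theorem vecMulVec_self_mem_spectra (hu : u ⬝ᵥ u = 1) : vecMulVec u u ∈ Spectra n :=
  ⟨by rw [trace_vecMulVec, hu], by simpa using posSemidef_vecMulVec_self_star u⟩

theorem mip_sub_vecMulVec_self_nonneg (hu : u ⬝ᵥ u = 1) {c : ℝ} (hc : 0 ≤ c) {X : Mat n}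
    (hX : X ∈ Spectra n) : 0 ≤ mip (X - vecMulVec u u) (-c • vecMulVec u u) := by
  obtain ⟨htrace, hpsd⟩ := hX
  have hle : mip (vecMulVec u u) X ≤ 1 := by
    simpa only [mip_vecMulVec, hu, htrace, mul_one] using dotProduct_mulVec_le_trace hpsd u
  rw [mip_comm, mip_smul_left, mip_sub_right, mip_vecMulVec_self, hu]
  nlinarith

theorem lam_neg_smul_vecMulVec_self_sub_lam (hn : 2 ≤ n) (hu : u ⬝ᵥ u = 1) {c : ℝ} (hc : 0 ≤ c) :
    lam (-c • vecMulVec u u) (n - 1) - lam (-c • vecMulVec u u) n = c := by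
  have hherm : (vecMulVec (-c • u) u).IsHermitian := by
    rw [smul_vecMulVec, isHermitian_iff_isSymm]
    exact (isSymm_vecMulVec_self u).smul _
  have hdot : (-c • u) ⬝ᵥ u = -c := by simp [smul_dotProduct, hu]
  rw [← smul_vecMulVec, lam_vecMulVec_sub_lam hn hherm (by linarith), hdot, neg_neg]

end Optimality

section NormalizedIndicator

variable {ι : Type*} [DecidableEq ι]

/-- The indicator vector of `s` scaled to Euclidean norm `1` (the zero vector if `s` is empty). It
is the paper's `z` for the first `k` indices and `z⊥` for the remaining ones. -/
def normalizedIndicator (s : Finset ι) (i : ι) : ℝ := if i ∈ s then 1 / √(#s : ℝ) else 0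

theorem normalizedIndicator_nonneg (s : Finset ι) (i : ι) : 0 ≤ normalizedIndicator s i := by
  unfold normalizedIndicator
  positivity

theorem vecMulVec_normalizedIndicator_apply (s : Finset ι) (i j : ι) :
    vecMulVec (normalizedIndicator s) (normalizedIndicator s) i j
      = if i ∈ s ∧ j ∈ s then 1 / (#s : ℝ) else 0 := by
  have hsqrt : 1 / √(#s : ℝ) * (1 / √(#s : ℝ)) = 1 / #s := by
    rw [one_div_mul_one_div, Real.mul_self_sqrt (Nat.cast_nonneg _)]
  by_cases hi : i ∈ s <;> by_cases hj : j ∈ s <;>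
    simp only [vecMulVec_apply, normalizedIndicator, hi, hj, hsqrt, if_true, if_false, mul_zero,
      zero_mul, and_self, and_false, false_and]

variable [Fintype ι]

theorem normalizedIndicator_dotProduct_self {s : Finset ι} (hs : s.Nonempty) :
    normalizedIndicator s ⬝ᵥ normalizedIndicator s = 1 := by
  have hcard : (#s : ℝ) ≠ 0 := by exact_mod_cast hs.card_ne_zero
  rw [← trace_vecMulVec]
  simp [trace, vecMulVec_normalizedIndicator_apply, hcard]

theorem normalizedIndicator_dotProduct_of_disjoint {s t : Finset ι} (hst : Disjoint s t) :
    normalizedIndicator s ⬝ᵥ normalizedIndicator t = 0 := by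
  refine sum_eq_zero fun i _ => ?_
  by_cases hi : i ∈ s
  · simp [normalizedIndicator, disjoint_left.1 hst hi]
  · simp [normalizedIndicator, hi]

theorem sum_abs_vecMulVec_normalizedIndicator (s : Finset ι) :
    ∑ i, ∑ j, |vecMulVec (normalizedIndicator s) (normalizedIndicator s) i j| = #s := by
  have hsum : ∑ i, |normalizedIndicator s i| = √(#s : ℝ) := by
    simp only [abs_of_nonneg (normalizedIndicator_nonneg s _)]
    simp [normalizedIndicator, ← div_eq_mul_inv]
  rw [sum_abs_vecMulVec, hsum, Real.mul_self_sqrt (Nat.cast_nonneg _)]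

end NormalizedIndicator

section SparsePCA

variable {n : ℕ} {s : Finset (Fin n)} {μ : ℝ}

/-- For `z` and `z⊥` the normalized indicators of `s` and `sᶜ`, the element of `μ ∂‖·‖₁` at `zzᵀ`
whose difference with the covariance matrix `zzᵀ + z⊥z⊥ᵀ` is a multiple of `zzᵀ`. -/
def dualCertificate (s : Finset (Fin n)) (μ : ℝ) : Mat n :=
  (μ * #s) • vecMulVec (normalizedIndicator s) (normalizedIndicator s)
    + vecMulVec (normalizedIndicator sᶜ) (normalizedIndicator sᶜ)

theorem abs_dualCertificate_apply_le (hμ : 1 ≤ μ * #sᶜ) (i j : Fin n) :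
    |dualCertificate s μ i j| ≤ μ := by
  have hμ_pos : 0 < μ := pos_of_mul_pos_left (by linarith) (Nat.cast_nonneg #sᶜ)
  have hsc_pos : (0 : ℝ) < #sᶜ := pos_of_mul_pos_right (by linarith) hμ_pos.le
  simp only [dualCertificate, Matrix.add_apply, Matrix.smul_apply, smul_eq_mul,
    vecMulVec_normalizedIndicator_apply, mem_compl]
  by_cases hi : i ∈ s <;> by_cases hj : j ∈ s
  · have hs_ne : (#s : ℝ) ≠ 0 := by exact_mod_cast card_ne_zero_of_mem hi
    simp [hi, hj, hs_ne, abs_of_pos hμ_pos]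
  · simp [hi, hj, hμ_pos.le]
  · simp [hi, hj, hμ_pos.le]
  · simpa [hi, hj] using (inv_le_iff_one_le_mul₀ hsc_pos).2 hμ

theorem mip_dualCertificate (hs : s.Nonempty) :
    mip (dualCertificate s μ) (vecMulVec (normalizedIndicator s) (normalizedIndicator s))
      = μ * #s := by
  rw [dualCertificate, mip_add_left, mip_smul_left, mip_vecMulVec_self, mip_vecMulVec_self,
    normalizedIndicator_dotProduct_self hs,
    normalizedIndicator_dotProduct_of_disjoint disjoint_compl_left]
  ring

theorem neg_smul_mem_subdiff_sparsePCAObjective (hs : s.Nonempty) (hμ : 1 ≤ μ * #sᶜ) :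
    -(1 - μ * #s) • vecMulVec (normalizedIndicator s) (normalizedIndicator s) ∈
      subdiff (sparsePCAObjective
        (vecMulVec (normalizedIndicator s) (normalizedIndicator s)
          + vecMulVec (normalizedIndicator sᶜ) (normalizedIndicator sᶜ)) μ)
        (vecMulVec (normalizedIndicator s) (normalizedIndicator s)) := by
  have hz := isSymm_vecMulVec_self (normalizedIndicator s)
  have hzp := isSymm_vecMulVec_self (normalizedIndicator sᶜ)
  have hmem := sub_mem_subdiff_sparsePCAObjective (hz.add hzp) ((hz.smul (μ * #s)).add hzp)
    (abs_dualCertificate_apply_le hμ)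
    ((mip_dualCertificate hs).trans (by rw [sum_abs_vecMulVec_normalizedIndicator]))
  convert hmem using 1
  module

end SparsePCA

theorem stmt_3_general {n k : ℕ} {s : Finset (Fin n)} {μ : ℝ} (hs : #s = k) (hk : 1 ≤ k)
    (hμn : 1 ≤ μ * (n - k)) (hμk : μ * k ≤ 1) (z zp : Fin n → ℝ)
    (hz : ∀ i, z i = if i ∈ s then 1 / √(k : ℝ) else 0)
    (hzp : ∀ i, zp i = if i ∈ s then 0 else 1 / √((n : ℝ) - k))
    (g : Mat n → ℝ)
    (hgdef : ∀ X : Mat n, g X = -(mip (vecMulVec z z + vecMulVec zp zp) X)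
        + μ * ∑ i, ∑ j, |X i j|) :
    vecMulVec z z ∈ Spectra n ∧ (vecMulVec z z).rank = 1 ∧
    (∀ X ∈ Spectra n, g (vecMulVec z z) ≤ g X) ∧
    (-(1 - μ * k) • vecMulVec z z) ∈ subdiff g (vecMulVec z z) ∧
    (∀ X ∈ Spectra n, mip (X - vecMulVec z z) (-(1 - μ * k) • vecMulVec z z) ≥ 0) ∧
    lam (-(1 - μ * k) • vecMulVec z z) (n - 1) - lam (-(1 - μ * k) • vecMulVec z z) n
      = 1 - μ * k := by
  subst hs
  have hcompl : (#sᶜ : ℝ) = n - #s := by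
    rw [card_compl, Fintype.card_fin, Nat.cast_sub (card_finset_fin_le s)]
  obtain rfl : z = normalizedIndicator s := funext hz
  obtain rfl : zp = normalizedIndicator sᶜ := by
    ext i
    by_cases hi : i ∈ s <;> simp [hzp, normalizedIndicator, hi, hcompl]
  obtain rfl : g = sparsePCAObjective _ μ := funext hgdef
  have hs : s.Nonempty := card_pos.1 hk
  have hunit := normalizedIndicator_dotProduct_self hs
  have hsubgrad := neg_smul_mem_subdiff_sparsePCAObjective hs (hcompl ▸ hμn)
  have hfirst_order X (hX : X ∈ Spectra n) :=
    mip_sub_vecMulVec_self_nonneg hunit (sub_nonneg.2 hμk) hX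
  have hn : 2 ≤ n := by
    have hcard_ne : #s ≠ n := fun h => by norm_num [h] at hμn
    have := card_finset_fin_le s
    lia
  have hne : normalizedIndicator s ≠ 0 := fun h => by simp [h] at hunit
  exact ⟨vecMulVec_self_mem_spectra hunit, rank_vecMulVec_eq_one hne hne,
    fun X hX => le_of_mem_subdiff hsubgrad hX.2.1 (hfirst_order X hX), hsubgrad, hfirst_order,
    lam_neg_smul_vecMulVec_self_sub_lam hn hunit (sub_nonneg.2 hμk)⟩

theorem stmt_3 {n k : ℕ} (hn : 4 ≤ n) (hk : 1 ≤ k) (hkn : 4 * k ≤ n)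
    (z zp : Fin n → ℝ)
    (hz : ∀ i : Fin n, z i = if (i : ℕ) < k then 1 / Real.sqrt (k : ℝ) else 0)
    (hzp : ∀ i : Fin n, zp i = if (i : ℕ) < k then 0 else 1 / Real.sqrt ((n : ℝ) - (k : ℝ)))
    (g : Mat n → ℝ)
    (hgdef : ∀ X : Mat n, g X = -(mip (vecMulVec z z + vecMulVec zp zp) X)
        + (1 / (2 * (k : ℝ))) * ∑ i, ∑ j, |X i j|)
    : vecMulVec z z ∈ Spectra n ∧ (vecMulVec z z).rank = 1 ∧
    (∀ X ∈ Spectra n, g (vecMulVec z z) ≤ g X) ∧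
    ((-(1 / 2) : ℝ) • vecMulVec z z) ∈ subdiff g (vecMulVec z z) ∧
    (∀ X ∈ Spectra n, mip (X - vecMulVec z z) ((-(1 / 2) : ℝ) • vecMulVec z z) ≥ 0) ∧
    lam ((-(1 / 2) : ℝ) • vecMulVec z z) (n - 1)
      - lam ((-(1 / 2) : ℝ) • vecMulVec z z) n = 1 / 2 := by
  have hk_pos : (0 : ℝ) < k := by exact_mod_cast hk
  have hkn' : 4 * (k : ℝ) ≤ n := by exact_mod_cast hkn
  have hhalf : (1 / 2 : ℝ) = 1 - 1 / (2 * k) * k := by field_simp; norm_num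
  rw [hhalf]
  exact stmt_3_general (s := {i | (i : ℕ) < k}) (by rw [Fin.card_filter_val_lt]; lia) hk
    (by field_simp; linarith) (by field_simp; norm_num) z zp (by simpa using hz)
    (by simpa using hzp) g hgdef
end
end

section
/- Let {(X_t,y_t)}_{t≥1} and {(Z_t,w_t)}_{t≥2} be generated by the extragradient method with constant step size η_t = η ≤ min{ 1/(β_X+β_Xy), 1/(β_y+β_yX), 1/(β_X+β_yX), 1/(β_y+β_Xy) } (assuming this minimum is positive). Then for every T ≥ 1, the ergodic averages satisfy: max_{y∈K} f( (1/T)·Σ_{t=1}^T Z_{t+1}, y ) − min_{X∈S_n} f( X, (1/T)·Σ_{t=1}^T w_{t+1} ) ≤ D² / (2ηT). -/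
open scoped BigOperators RealInnerProductSpace
open Matrix

noncomputable section

/-!
Stack the two players into one variable `p = (X, y)` of the Hilbert space `E ×₂ F`, and let
`G (X, y) = (∇_X f, -∇_y f)`. Two projections from the same point `u` and the three-point inequality
give `2η ⟪G z, z - x⟫ ≤ ‖u - x‖² - ‖u' - x‖²` as soon as `η` times the Lipschitz constant of `G` is
at most `1`. The conditions on `η` say that the matrix of partial Lipschitz constants has row and
column sums at most `1 / η`, so by the Schur test `G` is `1 / η`-Lipschitz. Telescoping bounds the
average of `⟪G z, z - x⟫`, which dominates the duality gap by convexity, concavity and Jensen.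
-/

section NearestPoint

variable {E F : Type*} [SeminormedAddCommGroup E] [SeminormedAddCommGroup F]

/-- `p` is a metric projection of `x` onto `C`: a point of `C` at minimal distance from `x`. It is a
relation rather than a function, so that neither existence nor uniqueness is presupposed. -/
def IsNearestPoint (C : Set E) (x p : E) : Prop :=
  p ∈ C ∧ ∀ q ∈ C, ‖x - p‖ ≤ ‖x - q‖

theorem exists_isNearestPoint_of_isClosed [ProperSpace E] {C : Set E} (hC : IsClosed C)
    (hne : C.Nonempty) (x : E) : ∃ p, IsNearestPoint C x p := by
  obtain ⟨p, hp, hdist⟩ := hC.exists_infDist_eq_dist hne x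
  refine ⟨p, hp, fun q hq => ?_⟩
  rw [← dist_eq_norm, ← dist_eq_norm, ← hdist]
  exact Metric.infDist_le_dist_of_mem hq

theorem IsNearestPoint.prod {C : Set E} {K : Set F} {x p : E} {y q : F}
    (hp : IsNearestPoint C x p) (hq : IsNearestPoint K y q) :
    IsNearestPoint (WithLp.ofLp ⁻¹' C ×ˢ K) (WithLp.toLp 2 (x, y)) (WithLp.toLp 2 (p, q)) := by
  refine ⟨⟨hp.1, hq.1⟩, fun r hr => ?_⟩
  refine (sq_le_sq₀ (norm_nonneg _) (norm_nonneg _)).1 ?_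
  simp only [WithLp.prod_norm_sq_eq_of_L2]
  gcongr
  · exact hp.2 _ hr.1
  · exact hq.2 _ hr.2

end NearestPoint

section VariationalInequality

variable {E : Type*} [NormedAddCommGroup E] [InnerProductSpace ℝ E]

theorem IsNearestPoint.inner_sub_sub_nonpos {C : Set E} {x p q : E} (hp : IsNearestPoint C x p)
    (hC : Convex ℝ C) (hq : q ∈ C) : ⟪x - p, q - p⟫ ≤ 0 := by
  refine (norm_eq_iInf_iff_real_inner_le_zero hC hp.1).1 (le_antisymm ?_ ?_) q hq
  · have : Nonempty C := ⟨⟨p, hp.1⟩⟩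
    exact le_ciInf fun q => hp.2 q q.2
  · exact ciInf_le (f := fun q : C => ‖x - q‖)
      ⟨0, Set.forall_mem_range.2 fun _ => norm_nonneg _⟩ ⟨p, hp.1⟩

theorem IsNearestPoint.two_mul_inner_le {C : Set E} {u g p q : E}
    (hp : IsNearestPoint C (u - g) p) (hC : Convex ℝ C) (hq : q ∈ C) :
    2 * ⟪g, p - q⟫ ≤ ‖u - q‖ ^ 2 - ‖p - q‖ ^ 2 - ‖u - p‖ ^ 2 := by
  have hvar : ⟪u - p, q - p⟫ + ⟪g, p - q⟫ ≤ 0 := by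
    have h := hp.inner_sub_sub_nonpos hC hq
    rwa [sub_right_comm, inner_sub_left, sub_eq_add_neg, ← inner_neg_right, neg_sub] at h
  have hexpand : ‖u - q‖ ^ 2 = ‖u - p‖ ^ 2 - 2 * ⟪u - p, q - p⟫ + ‖p - q‖ ^ 2 := by
    rw [← sub_sub_sub_cancel_right u q p, norm_sub_sq_real, norm_sub_rev q p]
  linarith

end VariationalInequality

section Extragradient

variable {E : Type*} [NormedAddCommGroup E] [InnerProductSpace ℝ E]

/-- `u` (the iterates) and `z` (the extrapolated points) form a run of the extragradient method for
the operator `G` on `C` with constant step size `η`. Indices follow the paper: `u` starts at `1`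
and `z` at `2`; the values below are irrelevant. -/
structure IsExtragradientRun (C : Set E) (G : E → E) (η : ℝ) (u z : ℕ → E) : Prop where
  init_mem : u 1 ∈ C
  extrapolate : ∀ t, 1 ≤ t → IsNearestPoint C (u t - η • G (u t)) (z (t + 1))
  update : ∀ t, 1 ≤ t → IsNearestPoint C (u t - η • G (z (t + 1))) (u (t + 1))

variable {C : Set E} {G : E → E} {η : ℝ} {u z : ℕ → E}

theorem IsExtragradientRun.mem (h : IsExtragradientRun C G η u z) {t : ℕ} (ht : 1 ≤ t) :
    u t ∈ C := by
  obtain _ | _ | t := t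
  · contradiction
  · exact h.init_mem
  · exact (h.update (t + 1) (by lia)).1

theorem extragradient_step {a b u z u' x : E} (hC : Convex ℝ C)
    (hz : IsNearestPoint C (u - a) z) (hu' : IsNearestPoint C (u - b) u') (hx : x ∈ C)
    (hab : ‖b - a‖ ≤ ‖z - u‖) :
    2 * ⟪b, z - x⟫ ≤ ‖u - x‖ ^ 2 - ‖u' - x‖ ^ 2 := by
  have hextrapolate := hz.two_mul_inner_le hC hu'.1
  have hupdate := hu'.two_mul_inner_le hC hx
  have herror : 2 * ⟪b - a, z - u'⟫ ≤ ‖u - z‖ ^ 2 + ‖z - u'‖ ^ 2 :=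
    calc 2 * ⟪b - a, z - u'⟫ ≤ 2 * (‖b - a‖ * ‖z - u'‖) := by gcongr; exact real_inner_le_norm _ _
      _ ≤ 2 * (‖u - z‖ * ‖z - u'‖) := by rw [norm_sub_rev u z]; gcongr
      _ ≤ ‖u - z‖ ^ 2 + ‖z - u'‖ ^ 2 := by rw [← mul_assoc]; exact two_mul_le_add_sq _ _
  have hsplit : ⟪b, z - x⟫ = ⟪b, u' - x⟫ + ⟪a, z - u'⟫ + ⟪b - a, z - u'⟫ := by
    simp only [inner_sub_left, inner_sub_right]; ring
  linarith

theorem IsExtragradientRun.sum_inner_le {x : E} {L : ℝ} (h : IsExtragradientRun C G η u z)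
    (hC : Convex ℝ C) (hG : ∀ p ∈ C, ∀ q ∈ C, ‖G p - G q‖ ≤ L * ‖p - q‖)
    (hη : 0 ≤ η) (hηL : η * L ≤ 1) (hx : x ∈ C) {T : ℕ} (hT : 1 ≤ T) :
    2 * η * ∑ t ∈ Finset.Icc 1 T, ⟪G (z (t + 1)), z (t + 1) - x⟫ ≤ ‖u 1 - x‖ ^ 2 := by
  have hstep : ∀ t ∈ Finset.Icc 1 T, 2 * η * ⟪G (z (t + 1)), z (t + 1) - x⟫ ≤
      -(‖u (t + 1) - x‖ ^ 2 - ‖u t - x‖ ^ 2) := by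
    intro t ht
    have ht1 := (Finset.mem_Icc.1 ht).1
    have hab : ‖η • G (z (t + 1)) - η • G (u t)‖ ≤ ‖z (t + 1) - u t‖ :=
      calc ‖η • G (z (t + 1)) - η • G (u t)‖ = η * ‖G (z (t + 1)) - G (u t)‖ := by
            rw [← smul_sub, norm_smul, Real.norm_of_nonneg hη]
        _ ≤ η * (L * ‖z (t + 1) - u t‖) := by
            gcongr; exact hG _ (h.extrapolate t ht1).1 _ (h.mem ht1)
        _ ≤ ‖z (t + 1) - u t‖ := by
            rw [← mul_assoc]; exact mul_le_of_le_one_left (norm_nonneg _) hηL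
    have hprogress := extragradient_step hC (h.extrapolate t ht1) (h.update t ht1) hx hab
    rw [real_inner_smul_left, ← mul_assoc] at hprogress
    linarith
  calc 2 * η * ∑ t ∈ Finset.Icc 1 T, ⟪G (z (t + 1)), z (t + 1) - x⟫
      ≤ ∑ t ∈ Finset.Icc 1 T, -(‖u (t + 1) - x‖ ^ 2 - ‖u t - x‖ ^ 2) := by
        rw [Finset.mul_sum]; exact Finset.sum_le_sum hstep
    _ = ‖u 1 - x‖ ^ 2 - ‖u (T + 1) - x‖ ^ 2 := by
        rw [Finset.sum_neg_distrib, Finset.sum_Icc_sub hT fun t => ‖u t - x‖ ^ 2, neg_sub]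
    _ ≤ ‖u 1 - x‖ ^ 2 := sub_le_self _ (sq_nonneg _)

end Extragradient

section Subgradient

variable {E : Type*} [NormedAddCommGroup E] [InnerProductSpace ℝ E] {C : Set E} {φ : E → ℝ}
  {g : E → E}

theorem convexOn_of_subgradient (hC : Convex ℝ C)
    (hg : ∀ x ∈ C, ∀ y ∈ C, φ x + ⟪g x, y - x⟫ ≤ φ y) : ConvexOn ℝ C φ := by
  refine ⟨hC, fun x hx y hy a b ha hb hab => ?_⟩
  set c := a • x + b • y with hc
  have hcC : c ∈ C := hC hx hy ha hb hab
  have hcancel : a * ⟪g c, x - c⟫ + b * ⟪g c, y - c⟫ = 0 := by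
    rw [← real_inner_smul_right, ← real_inner_smul_right, ← inner_add_right, smul_sub, smul_sub,
      sub_add_sub_comm, ← hc, ← add_smul, hab, one_smul, sub_self, inner_zero_right]
  calc φ c = a * (φ c + ⟪g c, x - c⟫) + b * (φ c + ⟪g c, y - c⟫) := by
        linear_combination -hcancel - φ c * hab
    _ ≤ a • φ x + b • φ y := by
        rw [smul_eq_mul, smul_eq_mul]
        gcongr
        · exact hg c hcC x hx
        · exact hg c hcC y hy

theorem concaveOn_of_supergradient (hC : Convex ℝ C)
    (hg : ∀ x ∈ C, ∀ y ∈ C, φ y ≤ φ x + ⟪g x, y - x⟫) : ConcaveOn ℝ C φ := by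
  refine neg_convexOn_iff.1 (convexOn_of_subgradient (g := -g) hC fun x hx y hy => ?_)
  simp only [Pi.neg_apply, inner_neg_left]
  linarith [hg x hx y hy]

end Subgradient

theorem schur_test {ι κ : Type*} [Fintype ι] [Fintype κ] {A : Matrix ι κ ℝ} {R S : ℝ}
    (hA : ∀ i j, 0 ≤ A i j) (hR : 0 ≤ R) (hrow : ∀ i, ∑ j, A i j ≤ R)
    (hcol : ∀ j, ∑ i, A i j ≤ S) (x : κ → ℝ) :
    ∑ i, (A *ᵥ x) i ^ 2 ≤ R * S * ∑ j, x j ^ 2 := by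
  have hcauchy : ∀ i, (A *ᵥ x) i ^ 2 ≤ (∑ j, A i j) * ∑ j, A i j * x j ^ 2 := fun i =>
    Finset.sum_sq_le_sum_mul_sum_of_sq_le_mul _ (fun j _ => hA i j)
      (fun j _ => mul_nonneg (hA i j) (sq_nonneg _)) fun j _ =>
        (show (A i j * x j) ^ 2 = A i j * (A i j * x j ^ 2) by ring).le
  calc ∑ i, (A *ᵥ x) i ^ 2 ≤ ∑ i, R * ∑ j, A i j * x j ^ 2 := by
        refine Finset.sum_le_sum fun i _ => (hcauchy i).trans ?_
        have hnonneg : 0 ≤ ∑ j, A i j * x j ^ 2 :=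
          Finset.sum_nonneg fun j _ => mul_nonneg (hA i j) (sq_nonneg _)
        gcongr
        exact hrow i
    _ = R * ∑ j, (∑ i, A i j) * x j ^ 2 := by
        rw [← Finset.mul_sum, Finset.sum_comm]; simp only [Finset.sum_mul]
    _ ≤ R * ∑ j, S * x j ^ 2 := by gcongr with j; exact hcol j
    _ = R * S * ∑ j, x j ^ 2 := by rw [← Finset.mul_sum, mul_assoc]

theorem csSup_image_sub_csInf_image_le {α β : Type*} {s : Set α} {t : Set β} (hs : s.Nonempty)
    (ht : t.Nonempty) {φ : α → ℝ} {ψ : β → ℝ} {c : ℝ} (h : ∀ a ∈ s, ∀ b ∈ t, φ a - ψ b ≤ c) :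
    sSup (φ '' s) - sInf (ψ '' t) ≤ c := by
  refine sub_le_comm.1 (le_csInf (ht.image ψ) (Set.forall_mem_image.2 fun b hb => ?_))
  refine sub_le_iff_le_add.2 (csSup_le (hs.image φ) (Set.forall_mem_image.2 fun a ha => ?_))
  linarith [h a ha b hb]

section SaddlePoint

variable {E F : Type*} [NormedAddCommGroup E] [NormedAddCommGroup F] {C : Set E} {K : Set F}
  {f : E → F → ℝ} {gX : E → F → E} {gY : E → F → F}

/-- The operator `(x, y) ↦ (∇_x f, -∇_y f)` of the saddle-point problem `min_x max_y f x y` with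
partial gradients `gX` and `gY`, on the `L²` product of the two spaces. -/
def saddleOperator (gX : E → F → E) (gY : E → F → F) (p : WithLp 2 (E × F)) :
    WithLp 2 (E × F) :=
  WithLp.toLp 2 (gX p.fst p.snd, -gY p.fst p.snd)

theorem norm_saddleOperator_sub_le {βX βy βXy βyX L : ℝ}
    (hβX0 : 0 ≤ βX) (hβy0 : 0 ≤ βy) (hβXy0 : 0 ≤ βXy) (hβyX0 : 0 ≤ βyX)
    (hLX : ∀ x ∈ C, ∀ x' ∈ C, ∀ y ∈ K, ‖gX x y - gX x' y‖ ≤ βX * ‖x - x'‖)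
    (hLy : ∀ x ∈ C, ∀ y ∈ K, ∀ y' ∈ K, ‖gY x y - gY x y'‖ ≤ βy * ‖y - y'‖)
    (hLXy : ∀ x ∈ C, ∀ y ∈ K, ∀ y' ∈ K, ‖gX x y - gX x y'‖ ≤ βXy * ‖y - y'‖)
    (hLyX : ∀ x ∈ C, ∀ x' ∈ C, ∀ y ∈ K, ‖gY x y - gY x' y‖ ≤ βyX * ‖x - x'‖)
    (hrowX : βX + βXy ≤ L) (hrowY : βy + βyX ≤ L) (hcolX : βX + βyX ≤ L) (hcolY : βy + βXy ≤ L)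
    {p q : WithLp 2 (E × F)} (hp : WithLp.ofLp p ∈ C ×ˢ K) (hq : WithLp.ofLp q ∈ C ×ˢ K) :
    ‖saddleOperator gX gY p - saddleOperator gX gY q‖ ≤ L * ‖p - q‖ := by
  have hL : 0 ≤ L := (add_nonneg hβX0 hβXy0).trans hrowX
  set a := ‖p.fst - q.fst‖
  set b := ‖p.snd - q.snd‖
  have hfst : ‖gX p.fst p.snd - gX q.fst q.snd‖ ≤ βX * a + βXy * b :=
    (norm_sub_le_norm_sub_add_norm_sub _ (gX q.fst p.snd) _).trans
      (add_le_add (hLX _ hp.1 _ hq.1 _ hp.2) (hLXy _ hq.1 _ hp.2 _ hq.2))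
  have hsnd : ‖-gY p.fst p.snd - -gY q.fst q.snd‖ ≤ βyX * a + βy * b := by
    rw [neg_sub_neg, norm_sub_rev]
    exact (norm_sub_le_norm_sub_add_norm_sub _ (gY q.fst p.snd) _).trans
      (add_le_add (hLyX _ hp.1 _ hq.1 _ hp.2) (hLy _ hq.1 _ hp.2 _ hq.2))
  have hschur : (βX * a + βXy * b) ^ 2 + (βyX * a + βy * b) ^ 2 ≤ L * L * (a ^ 2 + b ^ 2) := by
    simpa [Matrix.mulVec, dotProduct] using schur_test (A := !![βX, βXy; βyX, βy]) (R := L) (S := L)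
      (by simp [Fin.forall_fin_two, *]) hL (by simp [Fin.forall_fin_two, *, add_comm βyX])
      (by simp [Fin.forall_fin_two, *, add_comm βXy]) ![a, b]
  refine (sq_le_sq₀ (norm_nonneg _) (by positivity)).1 ?_
  calc ‖saddleOperator gX gY p - saddleOperator gX gY q‖ ^ 2
      = ‖gX p.fst p.snd - gX q.fst q.snd‖ ^ 2 + ‖-gY p.fst p.snd - -gY q.fst q.snd‖ ^ 2 :=
        WithLp.prod_norm_sq_eq_of_L2 _
    _ ≤ (βX * a + βXy * b) ^ 2 + (βyX * a + βy * b) ^ 2 := by gcongr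
    _ ≤ L * L * (a ^ 2 + b ^ 2) := hschur
    _ = (L * ‖p - q‖) ^ 2 := by
        rw [mul_pow, WithLp.prod_norm_sq_eq_of_L2, ← pow_two]; rfl

variable [InnerProductSpace ℝ E] [InnerProductSpace ℝ F]

theorem isExtragradientRun_saddleOperator {η : ℝ} {X Z : ℕ → E} {y w : ℕ → F}
    (hX1 : X 1 ∈ C) (hy1 : y 1 ∈ K)
    (hZ : ∀ t, 1 ≤ t → IsNearestPoint C (X t - η • gX (X t) (y t)) (Z (t + 1)))
    (hw : ∀ t, 1 ≤ t → IsNearestPoint K (y t + η • gY (X t) (y t)) (w (t + 1)))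
    (hX : ∀ t, 1 ≤ t → IsNearestPoint C (X t - η • gX (Z (t + 1)) (w (t + 1))) (X (t + 1)))
    (hy : ∀ t, 1 ≤ t → IsNearestPoint K (y t + η • gY (Z (t + 1)) (w (t + 1))) (y (t + 1))) :
    IsExtragradientRun (WithLp.ofLp ⁻¹' C ×ˢ K) (saddleOperator gX gY) η
      (fun t => WithLp.toLp 2 (X t, y t)) (fun t => WithLp.toLp 2 (Z t, w t)) := by
  refine ⟨⟨hX1, hy1⟩, fun t ht => ?_, fun t ht => ?_⟩
  · simpa [saddleOperator, ← WithLp.toLp_smul, ← WithLp.toLp_sub] using (hZ t ht).prod (hw t ht)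
  · simpa [saddleOperator, ← WithLp.toLp_smul, ← WithLp.toLp_sub] using (hX t ht).prod (hy t ht)

theorem sub_le_inner_saddleOperator
    (hconv : ∀ y ∈ K, ∀ x ∈ C, ∀ x' ∈ C, f x y + ⟪gX x y, x' - x⟫ ≤ f x' y)
    (hconc : ∀ x ∈ C, ∀ y ∈ K, ∀ y' ∈ K, f x y' ≤ f x y + ⟪gY x y, y' - y⟫)
    {p q : WithLp 2 (E × F)} (hp : WithLp.ofLp p ∈ C ×ˢ K) (hq : WithLp.ofLp q ∈ C ×ˢ K) :
    f p.fst q.snd - f q.fst p.snd ≤ ⟪saddleOperator gX gY p, p - q⟫ := by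
  have hfst : f p.fst p.snd + ⟪gX p.fst p.snd, q.fst - p.fst⟫ ≤ f q.fst p.snd :=
    hconv _ hp.2 _ hp.1 _ hq.1
  have hsnd : f p.fst q.snd ≤ f p.fst p.snd + ⟪gY p.fst p.snd, q.snd - p.snd⟫ :=
    hconc _ hp.1 _ hp.2 _ hq.2
  rw [← neg_sub, inner_neg_right] at hfst hsnd
  simp only [saddleOperator, WithLp.prod_inner_apply, inner_neg_left, WithLp.ofLp_sub,
    Prod.fst_sub, Prod.snd_sub, WithLp.ofLp_fst, WithLp.ofLp_snd]
  linarith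

theorem map_sum_sub_map_sum_le (hC : Convex ℝ C) (hK : Convex ℝ K)
    (hconv : ∀ y ∈ K, ∀ x ∈ C, ∀ x' ∈ C, f x y + ⟪gX x y, x' - x⟫ ≤ f x' y)
    (hconc : ∀ x ∈ C, ∀ y ∈ K, ∀ y' ∈ K, f x y' ≤ f x y + ⟪gY x y, y' - y⟫)
    {ι : Type*} {s : Finset ι} {a : ι → ℝ} (ha0 : ∀ i ∈ s, 0 ≤ a i) (ha1 : ∑ i ∈ s, a i = 1)
    {p : ι → WithLp 2 (E × F)} (hp : ∀ i ∈ s, WithLp.ofLp (p i) ∈ C ×ˢ K)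
    {q : WithLp 2 (E × F)} (hq : WithLp.ofLp q ∈ C ×ˢ K) :
    f (∑ i ∈ s, a i • (p i).fst) q.snd - f q.fst (∑ i ∈ s, a i • (p i).snd) ≤
      ∑ i ∈ s, a i * ⟪saddleOperator gX gY (p i), p i - q⟫ := by
  have hjensenX := (convexOn_of_subgradient hC (hconv _ hq.2)).map_sum_le ha0 ha1
    fun i hi => (hp i hi).1
  have hjensenY := (concaveOn_of_supergradient hK (hconc _ hq.1)).le_map_sum ha0 ha1
    fun i hi => (hp i hi).2
  calc f (∑ i ∈ s, a i • (p i).fst) q.snd - f q.fst (∑ i ∈ s, a i • (p i).snd)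
      ≤ ∑ i ∈ s, a i * (f (p i).fst q.snd - f q.fst (p i).snd) := by
        simp only [mul_sub, Finset.sum_sub_distrib]
        exact sub_le_sub hjensenX hjensenY
    _ ≤ ∑ i ∈ s, a i * ⟪saddleOperator gX gY (p i), p i - q⟫ :=
        Finset.sum_le_sum fun i hi => mul_le_mul_of_nonneg_left
          (sub_le_inner_saddleOperator hconv hconc (hp i hi) hq) (ha0 i hi)

theorem stmt_10_general (hC : Convex ℝ C) (hK : Convex ℝ K)
    (hconv : ∀ y ∈ K, ∀ x ∈ C, ∀ x' ∈ C, f x y + ⟪gX x y, x' - x⟫ ≤ f x' y)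
    (hconc : ∀ x ∈ C, ∀ y ∈ K, ∀ y' ∈ K, f x y' ≤ f x y + ⟪gY x y, y' - y⟫)
    {βX βy βXy βyX L : ℝ}
    (hβX0 : 0 ≤ βX) (hβy0 : 0 ≤ βy) (hβXy0 : 0 ≤ βXy) (hβyX0 : 0 ≤ βyX)
    (hLX : ∀ x ∈ C, ∀ x' ∈ C, ∀ y ∈ K, ‖gX x y - gX x' y‖ ≤ βX * ‖x - x'‖)
    (hLy : ∀ x ∈ C, ∀ y ∈ K, ∀ y' ∈ K, ‖gY x y - gY x y'‖ ≤ βy * ‖y - y'‖)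
    (hLXy : ∀ x ∈ C, ∀ y ∈ K, ∀ y' ∈ K, ‖gX x y - gX x y'‖ ≤ βXy * ‖y - y'‖)
    (hLyX : ∀ x ∈ C, ∀ x' ∈ C, ∀ y ∈ K, ‖gY x y - gY x' y‖ ≤ βyX * ‖x - x'‖)
    (hrowX : βX + βXy ≤ L) (hrowY : βy + βyX ≤ L) (hcolX : βX + βyX ≤ L) (hcolY : βy + βXy ≤ L)
    {η : ℝ} (hη0 : 0 < η) (hηL : η * L ≤ 1) {D : ℝ}
    (hD : ∀ x ∈ C, ∀ x' ∈ C, ∀ y ∈ K, ∀ y' ∈ K, √(‖x - x'‖ ^ 2 + ‖y - y'‖ ^ 2) ≤ D)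
    {X Z : ℕ → E} {y w : ℕ → F} (hX1 : X 1 ∈ C) (hy1 : y 1 ∈ K)
    (hZ : ∀ t, 1 ≤ t → IsNearestPoint C (X t - η • gX (X t) (y t)) (Z (t + 1)))
    (hw : ∀ t, 1 ≤ t → IsNearestPoint K (y t + η • gY (X t) (y t)) (w (t + 1)))
    (hX : ∀ t, 1 ≤ t → IsNearestPoint C (X t - η • gX (Z (t + 1)) (w (t + 1))) (X (t + 1)))
    (hy : ∀ t, 1 ≤ t → IsNearestPoint K (y t + η • gY (Z (t + 1)) (w (t + 1))) (y (t + 1)))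
    {T : ℕ} (hT : 1 ≤ T) :
    sSup ((f ((1 / (T : ℝ)) • ∑ t ∈ Finset.Icc 1 T, Z (t + 1))) '' K)
      - sInf ((fun x => f x ((1 / (T : ℝ)) • ∑ t ∈ Finset.Icc 1 T, w (t + 1))) '' C)
      ≤ D ^ 2 / (2 * η * (T : ℝ)) := by
  have hrun := isExtragradientRun_saddleOperator hX1 hy1 hZ hw hX hy
  have hCK : Convex ℝ (WithLp.ofLp ⁻¹' C ×ˢ K : Set (WithLp 2 (E × F))) :=
    (hC.prod hK).linear_preimage (WithLp.linearEquiv 2 ℝ (E × F)).toLinearMap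
  have hTpos : (0 : ℝ) < T := by exact_mod_cast hT
  refine csSup_image_sub_csInf_image_le ⟨_, hy1⟩ ⟨_, hX1⟩ fun v hv x hx => ?_
  have hgap := map_sum_sub_map_sum_le hC hK hconv hconc (s := Finset.Icc 1 T)
    (a := fun _ => 1 / (T : ℝ)) (fun _ _ => by positivity) (by simp [hTpos.ne'])
    (p := fun t => WithLp.toLp 2 (Z (t + 1), w (t + 1)))
    (fun t ht => (hrun.extrapolate t (Finset.mem_Icc.1 ht).1).1)
    (q := WithLp.toLp 2 (x, v)) ⟨hx, hv⟩
  have hregret := hrun.sum_inner_le hCK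
    (fun p hp q hq => norm_saddleOperator_sub_le hβX0 hβy0 hβXy0 hβyX0 hLX hLy hLXy hLyX
      hrowX hrowY hcolX hcolY hp hq) hη0.le hηL (x := WithLp.toLp 2 (x, v)) ⟨hx, hv⟩ hT
  have hdiam : ‖WithLp.toLp 2 (X 1, y 1) - WithLp.toLp 2 (x, v)‖ ^ 2 ≤ D ^ 2 := by
    rw [WithLp.prod_norm_sq_eq_of_L2]
    exact (Real.sqrt_le_iff.1 (hD _ hX1 _ hx _ hy1 _ hv)).2
  rw [← Finset.smul_sum, ← Finset.smul_sum, ← Finset.mul_sum, one_div_mul_eq_div] at hgap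
  rw [← div_div]
  refine hgap.trans (div_le_div_of_nonneg_right ?_ hTpos.le)
  rw [le_div_iff₀' (by positivity)]
  exact hregret.trans hdiam

end SaddlePoint

section Frobenius

open scoped Matrix.Norms.Frobenius

/-- The Frobenius inner product `∑ i j, conj (A i j) * B i j` on matrices, inducing the Frobenius
norm. -/
instance frobeniusInnerProductSpace {𝕜 m n : Type*} [RCLike 𝕜] [Fintype m] [Fintype n] :
    InnerProductSpace 𝕜 (Matrix m n 𝕜) where
  inner A B := ∑ i, ∑ j, inner 𝕜 (A i j) (B i j)
  norm_sq_eq_re_inner A := by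
    rw [Matrix.frobenius_norm_def, ← Real.sqrt_eq_rpow, Real.sq_sqrt (by positivity)]
    simp only [map_sum, ← norm_sq_eq_re_inner, Real.rpow_two]
  conj_inner_symm A B := by simp only [map_sum, inner_conj_symm]
  add_left A B D := by simp only [Matrix.add_apply, inner_add_left, Finset.sum_add_distrib]
  smul_left A B c := by simp only [Matrix.smul_apply, inner_smul_left, Finset.mul_sum]

variable {n m : ℕ}

theorem frob_eq_norm (A : Mat n) : frob A = ‖A‖ := by
  simp [frob, Matrix.frobenius_norm_def, Real.sqrt_eq_rpow]

theorem mip_eq_inner {A : Mat n} (hA : A.IsSymm) (B : Mat n) : mip A B = ⟪A, B⟫ := by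
  calc mip A B = ∑ i, ∑ j, A j i * B i j := by
        rw [mip, Matrix.trace_mul_comm]
        simp only [Matrix.trace, Matrix.diag, Matrix.mul_apply, mul_comm]
    _ = ∑ i, ∑ j, ⟪A i j, B i j⟫ := by simp [hA.apply, mul_comm]

theorem isSymm_of_mem_spectra {A : Mat n} (hA : A ∈ Spectra n) : A.IsSymm := by
  simpa [Matrix.IsHermitian, Matrix.IsSymm] using hA.2.isHermitian

theorem convex_spectra (n : ℕ) : Convex ℝ (Spectra n) := by
  intro A hA B hB a b ha hb hab
  refine ⟨?_, (hA.2.smul ha).add (hB.2.smul hb)⟩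
  simp [Matrix.trace_add, Matrix.trace_smul, hA.1, hB.1, hab]

theorem isClosed_spectra (n : ℕ) : IsClosed (Spectra n) := by
  simp only [Spectra, Matrix.posSemidef_iff_dotProduct_mulVec, Matrix.IsHermitian, Set.ofPred_and,
    Set.ofPred_forall]
  refine (isClosed_eq (by fun_prop) (by fun_prop)).inter
    ((isClosed_eq (by fun_prop) (by fun_prop)).inter (isClosed_iInter fun x => ?_))
  exact isClosed_le (by fun_prop) (by fun_prop)

theorem isNearestPoint_mproj {C : Set (Mat n)} (hC : IsClosed C) (hne : C.Nonempty) (A : Mat n) :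
    IsNearestPoint C A (mproj C A) := by
  have : ProperSpace (Mat n) := FiniteDimensional.proper_real _
  simp only [mproj, frob_eq_norm]
  exact Classical.epsilon_spec (exists_isNearestPoint_of_isClosed hC hne A)

theorem isNearestPoint_vproj {K : Set (Vec m)} (hK : IsClosed K) (hne : K.Nonempty) (x : Vec m) :
    IsNearestPoint K x (vproj K x) :=
  Classical.epsilon_spec (exists_isNearestPoint_of_isClosed hK hne x)

end Frobenius

theorem stmt_10 {n m : ℕ} (hn : 2 ≤ n)
    (K : Set (Vec m)) (hKne : K.Nonempty) (hKcp : IsCompact K) (hKcv : Convex ℝ K)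
    (f : Mat n → Vec m → ℝ)
    (gX : Mat n → Vec m → Mat n) (gY : Mat n → Vec m → Vec m)
    (hgXs : ∀ X y, (gX X y).IsSymm)
    (hconv : ∀ y ∈ K, ∀ X ∈ SymM n, ∀ X' ∈ SymM n,
      f X' y ≥ f X y + mip (gX X y) (X' - X))
    (hconc : ∀ X ∈ Spectra n, ∀ y y' : Vec m,
      f X y' ≤ f X y + ⟪gY X y, y' - y⟫)
    (βX βy βXy βyX : ℝ) (hβX0 : 0 ≤ βX) (hβy0 : 0 ≤ βy) (hβXy0 : 0 ≤ βXy) (hβyX0 : 0 ≤ βyX)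
    (hLX : ∀ X ∈ Spectra n, ∀ X' ∈ Spectra n, ∀ y ∈ K,
      frob (gX X y - gX X' y) ≤ βX * frob (X - X'))
    (hLy : ∀ X ∈ Spectra n, ∀ y ∈ K, ∀ y' ∈ K,
      ‖gY X y - gY X y'‖ ≤ βy * ‖y - y'‖)
    (hLXy : ∀ X ∈ Spectra n, ∀ y ∈ K, ∀ y' ∈ K,
      frob (gX X y - gX X y') ≤ βXy * ‖y - y'‖)
    (hLyX : ∀ X ∈ Spectra n, ∀ X' ∈ Spectra n, ∀ y ∈ K,
      ‖gY X y - gY X' y‖ ≤ βyX * frob (X - X'))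
    (η : ℝ) (hη0 : 0 < η)
    (hη1 : η ≤ 1 / (βX + βXy)) (hη2 : η ≤ 1 / (βy + βyX))
    (hη3 : η ≤ 1 / (βX + βyX)) (hη4 : η ≤ 1 / (βy + βXy))
    (D : ℝ)
    (hD : ∀ X ∈ Spectra n, ∀ X' ∈ Spectra n, ∀ y ∈ K, ∀ y' ∈ K,
      pnorm (X - X') (y - y') ≤ D)
    (X : ℕ → Mat n) (y : ℕ → Vec m) (Z : ℕ → Mat n) (w : ℕ → Vec m)
    (hX1 : X 1 ∈ Spectra n) (hy1 : y 1 ∈ K)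
    (hZrec : ∀ t, 1 ≤ t → Z (t + 1) = mproj (Spectra n) (X t - η • gX (X t) (y t)))
    (hwrec : ∀ t, 1 ≤ t → w (t + 1) = vproj K (y t + η • gY (X t) (y t)))
    (hXrec : ∀ t, 1 ≤ t → X (t + 1) = mproj (Spectra n) (X t - η • gX (Z (t + 1)) (w (t + 1))))
    (hyrec : ∀ t, 1 ≤ t → y (t + 1) = vproj K (y t + η • gY (Z (t + 1)) (w (t + 1))))
    : ∀ T : ℕ, 1 ≤ T →
      sSup ((f ((1 / (T : ℝ)) • ∑ t ∈ Finset.Icc 1 T, Z (t + 1))) '' K)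
        - sInf ((fun X => f X ((1 / (T : ℝ)) • ∑ t ∈ Finset.Icc 1 T, w (t + 1))) '' Spectra n)
        ≤ D ^ 2 / (2 * η * (T : ℝ)) := by
  intro T hT
  have hle_one_div {β : ℝ} (h : η ≤ 1 / β) : β ≤ 1 / η :=
    (le_one_div hη0 (one_div_pos.1 (hη0.trans_le h))).1 h
  have hmproj := isNearestPoint_mproj (isClosed_spectra n) ⟨X 1, hX1⟩
  have hvproj := isNearestPoint_vproj hKcp.isClosed hKne
  simp only [pnorm, frob_eq_norm] at hLX hLXy hLyX hD
  open scoped Matrix.Norms.Frobenius in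
  refine stmt_10_general (convex_spectra n) hKcv (fun v hv A hA B hB => ?_)
    (fun A hA v _ v' _ => hconc A hA v v') hβX0 hβy0 hβXy0 hβyX0 hLX hLy hLXy hLyX
    (hle_one_div hη1) (hle_one_div hη2) (hle_one_div hη3) (hle_one_div hη4)
    hη0 (mul_one_div_cancel hη0.ne').le hD hX1 hy1 (fun t ht => hZrec t ht ▸ hmproj _)
    (fun t ht => hwrec t ht ▸ hvproj _) (fun t ht => hXrec t ht ▸ hmproj _)
    (fun t ht => hyrec t ht ▸ hvproj _) hT
  rw [← mip_eq_inner (hgXs A v)]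
  exact hconv v hv A (isSymm_of_mem_spectra hA) B (isSymm_of_mem_spectra hB)
end
end
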